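/- Assume there exists a feasible flow with the same pattern as A'. Then F has a fixed point p* ∈ ℝⁿ, which is unique up to addition of a constant multiple of the all-ones vector, and for every initial point p⁰ ∈ ℝⁿ the iterates p^{k+1} = F(p^k) converge to a fixed point p̄ of F with limsup_{k→∞} ‖p^k − p̄‖^{1/k} ≤ ρ, where ρ = max{ |λ| : λ a complex eigenvalue of ∇F(p*), λ ≠ 1 } < 1; consequently the effective HOTS vectors e^{p^k} converge linearly at rate ρ to a HOTS vector e^{p̄}, which is unique up to a multiplicative constant. -/

import Mathlib

open BigOperators Filter Matrix

/-- `σ(p) = Σ_{i,j} A_{ij} e^{p_i − p_j}`. -/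
noncomputable def sigmaFun {n : ℕ} (A : Matrix (Fin n) (Fin n) ℝ) (p : Fin n → ℝ) : ℝ :=
  ∑ i, ∑ j, A i j * Real.exp (p i - p j)

/-- The reduced effective HOTS fixed-point map `F`, with `γ = (1−α)/(2α−1)`. -/
noncomputable def effHotsMap {n : ℕ} (A : Matrix (Fin n) (Fin n) ℝ) (α : ℝ)
    (p : Fin n → ℝ) : Fin n → ℝ :=
  fun k =>
    (1 / 2) * Real.log ((∑ i, A i k * Real.exp (p i))
      + (1 - α) / (2 * α - 1) * sigmaFun A p / ∑ j, Real.exp (-(p j)))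
    - (1 / 2) * Real.log ((∑ j, A k j * Real.exp (-(p j)))
      + (1 - α) / (2 * α - 1) * sigmaFun A p / ∑ i, Real.exp (p i))

/-- The augmented `(n+1)×(n+1)` matrix `A'`. -/
def augMatrix {n : ℕ} (A : Matrix (Fin n) (Fin n) ℝ) :
    Matrix (Fin (n + 1)) (Fin (n + 1)) ℝ :=
  fun i j =>
    if hi : (i : ℕ) < n then
      if hj : (j : ℕ) < n then A ⟨i, hi⟩ ⟨j, hj⟩ else 1
    else
      if (j : ℕ) < n then 1 else 0

/-- A feasible flow with the same pattern as `A'`. -/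
def FeasibleFlow {n : ℕ} (A : Matrix (Fin n) (Fin n) ℝ) (α : ℝ)
    (ρ : Matrix (Fin (n + 1)) (Fin (n + 1)) ℝ) : Prop :=
  (∀ i j, 0 < augMatrix A i j → 0 < ρ i j) ∧
  (∀ i j, augMatrix A i j = 0 → ρ i j = 0) ∧
  (∑ i, ∑ j, ρ i j = 1) ∧
  (∀ i, ∑ j, ρ i j = ∑ j, ρ j i) ∧
  (∑ j : Fin n, ρ (Fin.last n) j.castSucc = 1 - α) ∧
  (∑ i : Fin n, ρ i.castSucc (Fin.last n) = 1 - α)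

/-- The Jacobian matrix of a map `ℝⁿ → ℝⁿ` at a point. -/
noncomputable def jacMatrix {n : ℕ} (F : (Fin n → ℝ) → (Fin n → ℝ)) (p : Fin n → ℝ) :
    Matrix (Fin n) (Fin n) ℝ :=
  LinearMap.toMatrix' (fderiv ℝ F p : (Fin n → ℝ) →ₗ[ℝ] (Fin n → ℝ))

/-- `ρ = max{|λ| : λ eigenvalue of M, λ ≠ 1}`. -/
noncomputable def secondEigRadius {n : ℕ} (M : Matrix (Fin n) (Fin n) ℝ) : ℝ :=
  sSup {r : ℝ | ∃ μ : ℂ, μ ∈ spectrum ℂ (M.map (Complex.ofReal)) ∧ μ ≠ 1 ∧ r = ‖μ‖}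

/-!
Distribute a unit mass over the edges in proportion to `A_{ij} e^{p_i - p_j}`, and let the vertices
exchange a further mass `γ` with an additional node. Then `e^{2 (F p - p)} = inflow / outflow`, and
`outflow - inflow` is the gradient of the convex potential
`log σ(p) + γ (log ∑ e^{p_i} + log ∑ e^{-p_i})`.
By AM-GM and `log x ≤ x - 1`, every step strictly decreases this potential, except at fixed points.
A feasible flow makes it coercive modulo constants (Gibbs' inequality), so a fixed point exists and
the iterates converge to it modulo constants.

At a fixed point the Jacobian is `1 - H / (2 m)`, where `m = outflow` and the Hessian `H` is a sum
of covariances. Hence it is symmetric for the inner product with weights `m`, its eigenvalues are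
real and lie in `(-1, 1]`, and the eigenspace of `1` consists of the constants. Since `F` commutes
with adding constants, it descends to the quotient by constants, where it contracts at every rate
`r > ρ`. The increments `p^{k+1} - p^k` depend only on the class of `p^k` in the quotient; so they
are `O(r^k)`, and `p^k` itself converges at this rate.
-/

namespace EffHots

section Gibbs

variable {κ : Type*} [Fintype κ] {c : κ → ℝ}

/-- The partition function `∑ cᵢ e^{xᵢ}` of the states `κ` with multiplicities `c` and
log-weights `x`; a state with `c i = 0` is forbidden. -/
noncomputable def partitionFn (c x : κ → ℝ) : ℝ :=
  ∑ i, c i * Real.exp (x i)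

/-- The Gibbs distribution attached to `partitionFn c x`, which is also the gradient of
`log (partitionFn c ·)` at `x`. -/
noncomputable def gibbs (c x : κ → ℝ) (i : κ) : ℝ :=
  c i * Real.exp (x i) / partitionFn c x

/-- The covariance of `f` and `g` under the weights `w`, meant for `∑ i, w i = 1`. -/
def weightedCov (w f g : κ → ℝ) : ℝ :=
  ∑ i, w i * (f i * g i) - (∑ i, w i * f i) * ∑ i, w i * g i

lemma partitionFn_pos (hc : 0 < c) (x : κ → ℝ) : 0 < partitionFn c x := by
  obtain ⟨hc₀, i, hi⟩ := Pi.lt_def.1 hc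
  exact Finset.sum_pos' (fun j _ => mul_nonneg (hc₀ j) (Real.exp_pos _).le)
    ⟨i, Finset.mem_univ i, mul_pos hi (Real.exp_pos _)⟩

lemma gibbs_nonneg (hc : 0 ≤ c) (x : κ → ℝ) (i : κ) : 0 ≤ gibbs c x i :=
  div_nonneg (mul_nonneg (hc i) (Real.exp_pos _).le)
    (Finset.sum_nonneg fun j _ => mul_nonneg (hc j) (Real.exp_pos _).le)

lemma gibbs_pos (hc : ∀ i, 0 < c i) (x : κ → ℝ) (i : κ) : 0 < gibbs c x i :=
  div_pos (mul_pos (hc i) (Real.exp_pos _)) <|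
    Finset.sum_pos (fun j _ => mul_pos (hc j) (Real.exp_pos _)) ⟨i, Finset.mem_univ i⟩

lemma sum_gibbs (hc : 0 < c) (x : κ → ℝ) : ∑ i, gibbs c x i = 1 := by
  simp only [gibbs, ← Finset.sum_div]
  exact div_self (partitionFn_pos hc x).ne'

lemma partitionFn_add_const (c x : κ → ℝ) (t : ℝ) :
    partitionFn c (x + Function.const κ t) = Real.exp t * partitionFn c x := by
  simp only [partitionFn, Finset.mul_sum, Pi.add_apply, Function.const_apply, Real.exp_add]
  exact Finset.sum_congr rfl fun i _ => by ring

lemma gibbs_add_const (c x : κ → ℝ) (t : ℝ) : gibbs c (x + Function.const κ t) = gibbs c x := by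
  ext i
  rw [gibbs, gibbs, partitionFn_add_const, Pi.add_apply, Function.const_apply, Real.exp_add,
    ← mul_assoc, mul_comm (Real.exp t), mul_div_mul_right _ _ (Real.exp_pos t).ne']

lemma partitionFn_add (hc : 0 < c) (x y : κ → ℝ) :
    partitionFn c (x + y) = partitionFn c x * ∑ i, gibbs c x i * Real.exp (y i) := by
  have hZ := (partitionFn_pos hc x).ne'
  simp only [partitionFn, gibbs, Pi.add_apply, Real.exp_add, Finset.mul_sum]
  refine Finset.sum_congr rfl fun i _ => ?_
  change _ = partitionFn c x * (c i * Real.exp (x i) / partitionFn c x * Real.exp (y i))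
  field_simp

lemma sum_gibbs_mul_exp_pos (hc : 0 < c) (x y : κ → ℝ) :
    0 < ∑ i, gibbs c x i * Real.exp (y i) :=
  pos_of_mul_pos_right (partitionFn_add hc x y ▸ partitionFn_pos hc (x + y))
    (partitionFn_pos hc x).le

lemma log_partitionFn_add (hc : 0 < c) (x y : κ → ℝ) :
    Real.log (partitionFn c (x + y)) =
      Real.log (partitionFn c x) + Real.log (∑ i, gibbs c x i * Real.exp (y i)) := by
  rw [partitionFn_add hc,
    Real.log_mul (partitionFn_pos hc x).ne' (sum_gibbs_mul_exp_pos hc x y).ne']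

lemma log_partitionFn_add_le (hc : 0 < c) (x y : κ → ℝ) :
    Real.log (partitionFn c (x + y)) ≤
      Real.log (partitionFn c x) + (∑ i, gibbs c x i * Real.exp (y i) - 1) := by
  rw [log_partitionFn_add hc]
  gcongr
  exact Real.log_le_sub_one_of_pos (sum_gibbs_mul_exp_pos hc x y)

lemma le_log_partitionFn_add (hc : 0 < c) (x y : κ → ℝ) :
    Real.log (partitionFn c x) + ∑ i, gibbs c x i * y i ≤ Real.log (partitionFn c (x + y)) := by
  rw [log_partitionFn_add hc]
  gcongr
  rw [Real.le_log_iff_exp_le (sum_gibbs_mul_exp_pos hc x y)]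
  exact convexOn_exp.map_sum_le (fun i _ => gibbs_nonneg hc.le x i) (sum_gibbs hc x)
    fun i _ => Set.mem_univ (y i)

lemma lt_log_partitionFn_add (hc : ∀ i, 0 < c i) (x : κ → ℝ) {y : κ → ℝ} {j k : κ}
    (hjk : y j ≠ y k) :
    Real.log (partitionFn c x) + ∑ i, gibbs c x i * y i < Real.log (partitionFn c (x + y)) := by
  have hc' : 0 < c := Pi.lt_def.2 ⟨fun i => (hc i).le, j, hc j⟩
  rw [log_partitionFn_add hc']
  gcongr
  rw [Real.lt_log_iff_exp_lt (sum_gibbs_mul_exp_pos hc' x y)]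
  exact strictConvexOn_exp.map_sum_lt (fun i _ => gibbs_pos hc x i) (sum_gibbs hc' x)
    (fun i _ => Set.mem_univ (y i)) ⟨j, Finset.mem_univ j, k, Finset.mem_univ k, hjk⟩

lemma sum_mul_log_add_le {r : κ → ℝ} (hc : 0 ≤ c) (hr : 0 ≤ r) (hcr : ∀ i, c i = 0 → r i = 0)
    (x : κ → ℝ) :
    ∑ i, r i * (Real.log (c i) + x i) ≤ (∑ i, r i) * Real.log (partitionFn c x) := by
  rw [Finset.sum_mul]
  refine Finset.sum_le_sum fun i _ => ?_
  rcases (hc i).eq_or_lt' with hi | hi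
  · simp only [hcr i hi, zero_mul, le_refl]
  · refine mul_le_mul_of_nonneg_left ?_ (hr i)
    rw [← Real.log_exp (x i), ← Real.log_mul hi.ne' (Real.exp_pos _).ne']
    exact Real.log_le_log (mul_pos hi (Real.exp_pos _)) <|
      Finset.single_le_sum (f := fun j => c j * Real.exp (x j))
        (fun j _ => mul_nonneg (hc j) (Real.exp_pos _).le) (Finset.mem_univ i)

@[fun_prop]
lemma differentiable_partitionFn (c : κ → ℝ) : Differentiable ℝ (partitionFn c) := by
  unfold partitionFn
  fun_prop

lemma differentiable_gibbs (hc : 0 < c) (i : κ) : Differentiable ℝ (gibbs c · i) := by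
  have hZ : Differentiable ℝ fun x => (partitionFn c x)⁻¹ :=
    (differentiable_partitionFn c).inv fun x => (partitionFn_pos hc x).ne'
  simp only [gibbs, div_eq_mul_inv]
  fun_prop

lemma continuous_log_partitionFn (hc : 0 < c) :
    Continuous fun x => Real.log (partitionFn c x) :=
  (differentiable_partitionFn c).continuous.log fun x => (partitionFn_pos hc x).ne'

lemma hasLineDerivAt_sum_gibbs_mul (hc : 0 < c) (f x y : κ → ℝ) :
    HasLineDerivAt ℝ (fun x => ∑ i, gibbs c x i * f i) (weightedCov (gibbs c x) f y) x y := by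
  have hterm (i : κ) : HasDerivAt (fun t : ℝ => c i * Real.exp ((x + t • y) i))
      (c i * Real.exp (x i) * y i) 0 := by
    have hlin : HasDerivAt (fun t : ℝ => (x + t • y) i) (y i) 0 := by
      simpa using ((hasDerivAt_id (0 : ℝ)).mul_const (y i)).const_add (x i)
    simpa [mul_assoc] using hlin.exp.const_mul (c i)
  have hZ : HasDerivAt (fun t : ℝ => partitionFn c (x + t • y))
      (∑ i, c i * Real.exp (x i) * y i) 0 := .fun_sum fun i _ => hterm i
  have hN : HasDerivAt (fun t : ℝ => ∑ i, c i * Real.exp ((x + t • y) i) * f i)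
      (∑ i, c i * Real.exp (x i) * y i * f i) 0 :=
    .fun_sum fun i _ => (hterm i).mul_const (f i)
  have hZ₀ := (partitionFn_pos hc x).ne'
  have hquot := hN.fun_div hZ (by simpa using hZ₀)
  simp only [zero_smul, add_zero] at hquot
  have hmean (z g : κ → ℝ) :
      ∑ i, gibbs c z i * g i = (∑ i, c i * Real.exp (z i) * g i) / partitionFn c z := by
    simp only [gibbs, div_mul_eq_mul_div, Finset.sum_div]
  simp only [HasLineDerivAt, weightedCov, hmean]
  refine hquot.congr_deriv ?_
  simp only [mul_comm (f _) (y _), ← mul_assoc]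
  field_simp

lemma weightedCov_comm (w f g : κ → ℝ) : weightedCov w f g = weightedCov w g f := by
  simp only [weightedCov, mul_comm (f _) (g _), mul_comm (∑ i, w i * f i)]

lemma weightedCov_self_le (w f : κ → ℝ) : weightedCov w f f ≤ ∑ i, w i * f i ^ 2 := by
  simp only [weightedCov, ← sq]
  exact sub_le_self _ (sq_nonneg _)

lemma weightedCov_self_eq {w : κ → ℝ} (hw : ∑ i, w i = 1) (f : κ → ℝ) :
    weightedCov w f f = ∑ i, w i * (f i - ∑ j, w j * f j) ^ 2 := by
  have hexpand (m : ℝ) : ∑ i, w i * (f i - m) ^ 2 =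
      ∑ i, w i * (f i * f i) - 2 * m * ∑ i, w i * f i + m ^ 2 * ∑ i, w i := by
    simp only [Finset.mul_sum, ← Finset.sum_sub_distrib, ← Finset.sum_add_distrib]
    exact Finset.sum_congr rfl fun i _ => by ring
  rw [hexpand, hw, weightedCov]
  ring

lemma weightedCov_self_nonneg {w : κ → ℝ} (hw₀ : 0 ≤ w) (hw : ∑ i, w i = 1) (f : κ → ℝ) :
    0 ≤ weightedCov w f f := by
  rw [weightedCov_self_eq hw]
  exact Finset.sum_nonneg fun i _ => mul_nonneg (hw₀ i) (sq_nonneg _)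

lemma eq_of_weightedCov_self_eq_zero {w : κ → ℝ} (hw₀ : ∀ i, 0 < w i) (hw : ∑ i, w i = 1)
    {f : κ → ℝ} (hf : weightedCov w f f = 0) (i : κ) : f i = ∑ j, w j * f j := by
  rw [weightedCov_self_eq hw, Finset.sum_eq_zero_iff_of_nonneg
    fun i _ => mul_nonneg (hw₀ i).le (sq_nonneg _)] at hf
  have hi := (mul_eq_zero.1 (hf i (Finset.mem_univ i))).resolve_left (hw₀ i).ne'
  exact sub_eq_zero.1 (pow_eq_zero_iff two_ne_zero |>.1 hi)

end Gibbs

section Balancing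

variable {ι : Type*} {a : ι × ι → ℝ} {γ : ℝ}

/-- The coboundary operator of the complete digraph: the potential difference `p i - p j` along
the edge `(i, j)`. -/
def edgeDiff : (ι → ℝ) →ₗ[ℝ] (ι × ι → ℝ) :=
  LinearMap.funLeft ℝ ℝ Prod.fst - LinearMap.funLeft ℝ ℝ Prod.snd

@[simp]
lemma edgeDiff_apply (p : ι → ℝ) (e : ι × ι) : edgeDiff p e = p e.1 - p e.2 := rfl

@[simp]
lemma edgeDiff_const (c : ℝ) : edgeDiff (Function.const ι c) = 0 := by
  ext e
  simp

lemma nonempty_of_weight_pos (ha : 0 < a) : Nonempty ι :=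
  let ⟨_, e, _⟩ := Pi.lt_def.1 ha
  ⟨e.1⟩

variable [Fintype ι]

/-- The mass leaving `k` when a unit mass is distributed over the edges according to the Gibbs
weights of `a` and a mass `γ` is sent to an additional node according to the Gibbs weights of the
vertices. The additional node corresponds to the last index of `augMatrix`. -/
noncomputable def outflow (a : ι × ι → ℝ) (γ : ℝ) (p : ι → ℝ) (k : ι) : ℝ :=
  ∑ j, gibbs a (edgeDiff p) (k, j) + γ * gibbs 1 p k

/-- The mass entering `k`, see `outflow`; the additional node sends back the mass `γ`. -/
noncomputable def inflow (a : ι × ι → ℝ) (γ : ℝ) (p : ι → ℝ) (k : ι) : ℝ :=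
  ∑ i, gibbs a (edgeDiff p) (i, k) + γ * gibbs 1 (-p) k

/-- One step of flow balancing at all vertices simultaneously. -/
noncomputable def balancingMap (a : ι × ι → ℝ) (γ : ℝ) (p : ι → ℝ) (k : ι) : ℝ :=
  p k + (1 / 2) * (Real.log (inflow a γ p k) - Real.log (outflow a γ p k))

/-- The convex potential whose gradient at `p` is `outflow a γ p - inflow a γ p`. -/
noncomputable def potential (a : ι × ι → ℝ) (γ : ℝ) (p : ι → ℝ) : ℝ :=
  Real.log (partitionFn a (edgeDiff p)) +
    γ * (Real.log (partitionFn 1 p) + Real.log (partitionFn 1 (-p)))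

lemma gibbs_one_pos (x : ι → ℝ) (k : ι) : 0 < gibbs 1 x k :=
  gibbs_pos (fun _ => one_pos) x k

lemma outflow_pos (ha : 0 ≤ a) (hγ : 0 < γ) (p : ι → ℝ) (k : ι) : 0 < outflow a γ p k :=
  add_pos_of_nonneg_of_pos (Finset.sum_nonneg fun _ _ => gibbs_nonneg ha _ _)
    (mul_pos hγ (gibbs_one_pos _ k))

lemma inflow_pos (ha : 0 ≤ a) (hγ : 0 < γ) (p : ι → ℝ) (k : ι) : 0 < inflow a γ p k :=
  add_pos_of_nonneg_of_pos (Finset.sum_nonneg fun _ _ => gibbs_nonneg ha _ _)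
    (mul_pos hγ (gibbs_one_pos _ k))

lemma sum_outflow_mul_add_sum_inflow_mul (a : ι × ι → ℝ) (γ : ℝ) (p s t : ι → ℝ) :
    ∑ k, outflow a γ p k * s k + ∑ k, inflow a γ p k * t k =
      ∑ e, gibbs a (edgeDiff p) e * (s e.1 + t e.2) +
        γ * (∑ k, gibbs 1 p k * s k + ∑ k, gibbs 1 (-p) k * t k) := by
  have hout : ∑ k, outflow a γ p k * s k =
      ∑ e, gibbs a (edgeDiff p) e * s e.1 + γ * ∑ k, gibbs 1 p k * s k := by
    simp only [outflow, add_mul, Finset.sum_add_distrib, Finset.sum_mul, Finset.mul_sum,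
      Fintype.sum_prod_type, mul_assoc]
  have hin : ∑ k, inflow a γ p k * t k =
      ∑ e, gibbs a (edgeDiff p) e * t e.2 + γ * ∑ k, gibbs 1 (-p) k * t k := by
    simp only [inflow, add_mul, Finset.sum_add_distrib, Finset.sum_mul, Finset.mul_sum,
      Fintype.sum_prod_type_right, mul_assoc]
  simp only [hout, hin, mul_add, Finset.sum_add_distrib]
  ring

lemma sum_outflow_add_sum_inflow (ha : 0 < a) (γ : ℝ) (p : ι → ℝ) :
    ∑ k, outflow a γ p k + ∑ k, inflow a γ p k = 2 * (1 + γ) := by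
  have := nonempty_of_weight_pos ha
  have h := sum_outflow_mul_add_sum_inflow_mul a γ p 1 1
  simp only [Pi.one_apply, mul_one, ← Finset.sum_mul, sum_gibbs ha, sum_gibbs zero_lt_one] at h
  linarith

lemma exp_neg_mul_partitionFn_mul_outflow (ha : 0 < a) (γ : ℝ) (p : ι → ℝ) (k : ι) :
    Real.exp (-p k) * (partitionFn a (edgeDiff p) * outflow a γ p k) =
      ∑ j, a (k, j) * Real.exp (-p j) +
        γ * partitionFn a (edgeDiff p) / ∑ i, Real.exp (p i) := by
  have hσ := (partitionFn_pos ha (edgeDiff p)).ne'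
  have hedge (j : ι) : Real.exp (-p k) * (partitionFn a (edgeDiff p) *
      gibbs a (edgeDiff p) (k, j)) = a (k, j) * Real.exp (-p j) := by
    rw [gibbs, mul_div_cancel₀ _ hσ, mul_left_comm, ← Real.exp_add, edgeDiff_apply]
    ring_nf
  have hvertex : Real.exp (-p k) * gibbs 1 p k = 1 / ∑ i, Real.exp (p i) := by
    rw [gibbs, partitionFn]
    simp [← mul_div_assoc, ← Real.exp_add]
  rw [outflow, mul_add, mul_add, Finset.mul_sum, Finset.mul_sum,
    Finset.sum_congr rfl fun j _ => hedge j]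
  linear_combination (partitionFn a (edgeDiff p) * γ) * hvertex

lemma exp_mul_partitionFn_mul_inflow (ha : 0 < a) (γ : ℝ) (p : ι → ℝ) (k : ι) :
    Real.exp (p k) * (partitionFn a (edgeDiff p) * inflow a γ p k) =
      ∑ i, a (i, k) * Real.exp (p i) +
        γ * partitionFn a (edgeDiff p) / ∑ j, Real.exp (-p j) := by
  have hσ := (partitionFn_pos ha (edgeDiff p)).ne'
  have hedge (i : ι) : Real.exp (p k) * (partitionFn a (edgeDiff p) *
      gibbs a (edgeDiff p) (i, k)) = a (i, k) * Real.exp (p i) := by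
    rw [gibbs, mul_div_cancel₀ _ hσ, mul_left_comm, ← Real.exp_add, edgeDiff_apply, add_sub_cancel]
  have hvertex : Real.exp (p k) * gibbs 1 (-p) k = 1 / ∑ j, Real.exp (-p j) := by
    rw [gibbs, partitionFn]
    simp [← mul_div_assoc, ← Real.exp_add]
  rw [inflow, mul_add, mul_add, Finset.mul_sum, Finset.mul_sum,
    Finset.sum_congr rfl fun i _ => hedge i]
  linear_combination (partitionFn a (edgeDiff p) * γ) * hvertex

lemma outflow_add_const (a : ι × ι → ℝ) (γ : ℝ) (p : ι → ℝ) (c : ℝ) :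
    outflow a γ (p + Function.const ι c) = outflow a γ p := by
  ext k
  rw [outflow, outflow, map_add, edgeDiff_const, add_zero, gibbs_add_const]

lemma inflow_add_const (a : ι × ι → ℝ) (γ : ℝ) (p : ι → ℝ) (c : ℝ) :
    inflow a γ (p + Function.const ι c) = inflow a γ p := by
  ext k
  rw [inflow, inflow, map_add, edgeDiff_const, add_zero, neg_add, Function.const_neg,
    gibbs_add_const]

lemma balancingMap_add_const (a : ι × ι → ℝ) (γ : ℝ) (p : ι → ℝ) (c : ℝ) :
    balancingMap a γ (p + Function.const ι c) = balancingMap a γ p + Function.const ι c := by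
  ext k
  simp only [balancingMap, outflow_add_const, inflow_add_const, Pi.add_apply, Function.const_apply]
  ring

lemma potential_add_const (ha : 0 < a) (γ : ℝ) (p : ι → ℝ) (c : ℝ) :
    potential a γ (p + Function.const ι c) = potential a γ p := by
  have := nonempty_of_weight_pos ha
  have hlog (x : ι → ℝ) (t : ℝ) : Real.log (partitionFn 1 (x + Function.const ι t)) =
      t + Real.log (partitionFn 1 x) := by
    rw [partitionFn_add_const, Real.log_mul (Real.exp_pos t).ne'
      (partitionFn_pos zero_lt_one x).ne', Real.log_exp]
  rw [potential, potential, map_add, edgeDiff_const, add_zero, neg_add, Function.const_neg, hlog,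
    hlog]
  ring

lemma balancingMap_eq_self_iff (ha : 0 ≤ a) (hγ : 0 < γ) (p : ι → ℝ) :
    balancingMap a γ p = p ↔ inflow a γ p = outflow a γ p := by
  simp only [funext_iff, balancingMap, add_eq_left]
  refine forall_congr' fun k => ⟨fun h => ?_, fun h => by rw [h, sub_self, mul_zero]⟩
  exact Real.log_injOn_pos (inflow_pos ha hγ p k) (outflow_pos ha hγ p k) (by linarith)

lemma outflow_mul_exp_balancingMap_sub (ha : 0 ≤ a) (hγ : 0 < γ) (p : ι → ℝ) (k : ι) :
    outflow a γ p k * Real.exp (2 * (balancingMap a γ p k - p k)) = inflow a γ p k := by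
  have hout := outflow_pos ha hγ p k
  rw [balancingMap, add_sub_cancel_left, ← mul_assoc, mul_one_div_cancel two_ne_zero, one_mul,
    Real.exp_sub, Real.exp_log (inflow_pos ha hγ p k), Real.exp_log hout,
    mul_div_cancel₀ _ hout.ne']

lemma two_mul_exp_add_le (x y : ℝ) :
    2 * Real.exp (x + y) ≤ Real.exp (2 * x) + Real.exp (2 * y) := by
  rw [Real.exp_add, two_mul x, two_mul y, Real.exp_add, Real.exp_add, ← sq, ← sq, ← mul_assoc]
  exact two_mul_le_add_sq _ _

lemma two_mul_exp_lt {x : ℝ} (hx : x ≠ 0) : 2 * Real.exp x < Real.exp (2 * x) + 1 := by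
  have hne : Real.exp x - 1 ≠ 0 := sub_ne_zero.2 fun h => hx (Real.exp_eq_one_iff x |>.1 h)
  rw [two_mul x, Real.exp_add]
  linarith [sq_pos_of_ne_zero hne]

-- The majorant separates the coordinates of `d`; `balancingMap` minimises it coordinatewise.
lemma potential_add_lt (ha : 0 < a) (hγ : 0 < γ) (p : ι → ℝ) {d : ι → ℝ} (hd : d ≠ 0) :
    potential a γ (p + d) < potential a γ p +
      (∑ k, outflow a γ p k * Real.exp (2 * d k) + ∑ k, inflow a γ p k * Real.exp (2 * -d k)) / 2
        - (1 + γ) := by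
  have := nonempty_of_weight_pos ha
  obtain ⟨k, hk⟩ := Function.ne_iff.1 hd
  have hedge : 2 * ∑ e, gibbs a (edgeDiff p) e * Real.exp (edgeDiff d e) ≤
      ∑ e, gibbs a (edgeDiff p) e * (Real.exp (2 * d e.1) + Real.exp (2 * -d e.2)) := by
    rw [Finset.mul_sum]
    refine Finset.sum_le_sum fun e _ => ?_
    rw [mul_left_comm, edgeDiff_apply, sub_eq_add_neg]
    exact mul_le_mul_of_nonneg_left (two_mul_exp_add_le _ _) (gibbs_nonneg ha.le _ e)
  have hvertex (x : ι → ℝ) {y : ι → ℝ} (hy : y k ≠ 0) :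
      2 * ∑ i, gibbs 1 x i * Real.exp (y i) < ∑ i, gibbs 1 x i * Real.exp (2 * y i) + 1 := by
    rw [← sum_gibbs zero_lt_one x, Finset.mul_sum, ← Finset.sum_add_distrib]
    simp only [mul_left_comm (2 : ℝ), ← mul_add_one]
    refine Finset.sum_lt_sum (fun i _ => ?_) ⟨k, Finset.mem_univ k, ?_⟩
    · refine mul_le_mul_of_nonneg_left ?_ (gibbs_one_pos x i).le
      simpa using two_mul_exp_add_le (y i) 0
    · exact mul_lt_mul_of_pos_left (two_mul_exp_lt hy) (gibbs_one_pos x k)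
  have hp := hvertex p hk
  have hn := hvertex (-p) (y := -d) (neg_ne_zero.2 hk)
  have hZ := log_partitionFn_add_le ha (edgeDiff p) (edgeDiff d)
  have hZp := log_partitionFn_add_le zero_lt_one p d
  have hZn := log_partitionFn_add_le zero_lt_one (-p) (-d)
  have hmass := sum_outflow_mul_add_sum_inflow_mul a γ p
    (fun k => Real.exp (2 * d k)) (fun k => Real.exp (2 * -d k))
  rw [hmass, potential, potential, map_add, neg_add]
  simp only [Pi.neg_apply] at hn hZn
  nlinarith [mul_le_mul_of_nonneg_left (add_le_add hZp hZn) hγ.le,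
    mul_lt_mul_of_pos_left (add_lt_add hp hn) hγ]

lemma potential_balancingMap_lt (ha : 0 < a) (hγ : 0 < γ) {p : ι → ℝ}
    (hp : balancingMap a γ p ≠ p) : potential a γ (balancingMap a γ p) < potential a γ p := by
  have hlt := potential_add_lt ha hγ p (sub_ne_zero.2 hp)
  have hin (k : ι) : inflow a γ p k * Real.exp (2 * -(balancingMap a γ p k - p k)) =
      outflow a γ p k := by
    rw [← outflow_mul_exp_balancingMap_sub ha.le hγ, mul_assoc, ← Real.exp_add, mul_neg,
      add_neg_cancel, Real.exp_zero, mul_one]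
  simp only [add_sub_cancel, Pi.sub_apply, hin, outflow_mul_exp_balancingMap_sub ha.le hγ] at hlt
  linarith [sum_outflow_add_sum_inflow ha γ p]

lemma potential_iterate_balancingMap_le (ha : 0 < a) (hγ : 0 < γ) (x : ι → ℝ) (k : ℕ) :
    potential a γ ((balancingMap a γ)^[k] x) ≤ potential a γ x := by
  induction k with
  | zero => exact le_rfl
  | succ k ih =>
    rw [Function.iterate_succ_apply']
    by_cases hk : balancingMap a γ ((balancingMap a γ)^[k] x) = (balancingMap a γ)^[k] x
    · rwa [hk]
    · exact (potential_balancingMap_lt ha hγ hk).le.trans ih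

lemma lt_potential_add (ha : 0 < a) (hγ : 0 < γ) (p : ι → ℝ) {d : ι → ℝ} {j k : ι}
    (hd : d j ≠ d k) :
    potential a γ p + ∑ i, (outflow a γ p i - inflow a γ p i) * d i < potential a γ (p + d) := by
  have := nonempty_of_weight_pos ha
  have hZ := le_log_partitionFn_add ha (edgeDiff p) (edgeDiff d)
  have hZp := lt_log_partitionFn_add (c := 1) (fun _ => one_pos) p hd
  have hZn := le_log_partitionFn_add zero_lt_one (-p) (-d)
  have hmass := sum_outflow_mul_add_sum_inflow_mul a γ p d (-d)
  simp only [Pi.neg_apply, mul_neg, Finset.sum_neg_distrib, ← sub_eq_add_neg] at hmass hZn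
  simp only [sub_mul, Finset.sum_sub_distrib, hmass]
  rw [potential, potential, map_add, neg_add']
  simp only [edgeDiff_apply] at hZ
  nlinarith [mul_lt_mul_of_pos_left (add_lt_add_of_lt_of_le hZp hZn) hγ]

lemma exists_eq_add_const_of_balancingMap_eq (ha : 0 < a) (hγ : 0 < γ) {p q : ι → ℝ}
    (hp : balancingMap a γ p = p) (hq : balancingMap a γ q = q) :
    ∃ c : ℝ, q = p + Function.const ι c := by
  have hlt {p q : ι → ℝ} (hp : balancingMap a γ p = p) {j k : ι} (h : (q - p) j ≠ (q - p) k) :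
      potential a γ p < potential a γ q := by
    have := lt_potential_add ha hγ p h
    rw [balancingMap_eq_self_iff ha.le hγ] at hp
    simpa [hp] using this
  obtain ⟨k⟩ := nonempty_of_weight_pos ha
  refine ⟨(q - p) k, eq_add_of_sub_eq' (funext fun j => ?_)⟩
  by_contra hjk
  refine lt_asymm (hlt hp hjk) (hlt hq (j := j) (k := k) fun h => hjk ?_)
  rw [← neg_sub p q, Pi.neg_apply, h]
  rfl

lemma differentiable_outflow (ha : 0 < a) (γ : ℝ) (k : ι) :
    Differentiable ℝ (outflow a γ · k) := by
  have := nonempty_of_weight_pos ha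
  have hedge (e : ι × ι) : Differentiable ℝ fun p : ι → ℝ => gibbs a (edgeDiff p) e :=
    (differentiable_gibbs ha e).comp edgeDiff.toContinuousLinearMap.differentiable
  have hvertex := differentiable_gibbs zero_lt_one k
  unfold outflow
  fun_prop

lemma differentiable_inflow (ha : 0 < a) (γ : ℝ) (k : ι) :
    Differentiable ℝ (inflow a γ · k) := by
  have := nonempty_of_weight_pos ha
  have hedge (e : ι × ι) : Differentiable ℝ fun p : ι → ℝ => gibbs a (edgeDiff p) e :=
    (differentiable_gibbs ha e).comp edgeDiff.toContinuousLinearMap.differentiable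
  have hvertex : Differentiable ℝ fun p : ι → ℝ => gibbs 1 (-p) k :=
    (differentiable_gibbs zero_lt_one k).comp (by fun_prop)
  unfold inflow
  fun_prop

lemma differentiable_balancingMap (ha : 0 < a) (hγ : 0 < γ) :
    Differentiable ℝ (balancingMap a γ) := by
  refine differentiable_pi.2 fun k => ?_
  have hin := (differentiable_inflow ha γ k).log fun p => (inflow_pos ha.le hγ p k).ne'
  have hout := (differentiable_outflow ha γ k).log fun p => (outflow_pos ha.le hγ p k).ne'
  unfold balancingMap
  fun_prop

lemma continuous_potential (ha : 0 < a) (γ : ℝ) : Continuous (potential a γ) := by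
  have := nonempty_of_weight_pos ha
  have hedge := (continuous_log_partitionFn ha).comp
    (edgeDiff (ι := ι)).toContinuousLinearMap.continuous
  have hvertex := continuous_log_partitionFn (zero_lt_one' (ι → ℝ))
  exact hedge.add ((hvertex.add (hvertex.comp continuous_neg)).const_mul γ)

end Balancing

lemma tendsto_nhds_of_strict_descent {X : Type*} [TopologicalSpace X] {K : Set X}
    (hK : IsCompact K) {G : X → X} (hG : Continuous G) {φ : X → ℝ} (hφ : Continuous φ) {w : X}
    (hw : G w = w) (hlt : ∀ x ∈ K, x ≠ w → φ (G x) < φ x) {z : ℕ → X} (hz : ∀ k, z k ∈ K)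
    (hstep : ∀ k, z (k + 1) = G (z k)) : Tendsto z atTop (nhds w) := by
  have hanti : Antitone (φ ∘ z) := antitone_nat_of_succ_le fun k => by
    rw [Function.comp_apply, Function.comp_apply, hstep]
    by_cases hk : z k = w
    · rw [hk, hw]
    · exact (hlt _ (hz k) hk).le
  have hbdd : BddBelow (Set.range (φ ∘ z)) :=
    (hK.image hφ).bddBelow.mono (Set.range_subset_iff.2 fun k => Set.mem_image_of_mem φ (hz k))
  have hlim := tendsto_atTop_ciInf hanti hbdd
  have hlim' : Tendsto ((φ ∘ G) ∘ z) atTop (nhds (⨅ k, (φ ∘ z) k)) :=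
    (hlim.comp (tendsto_add_atTop_nat 1)).congr fun k => congrArg φ (hstep k)
  refine hK.tendsto_nhds_of_unique_mapClusterPt (Eventually.of_forall hz) fun x hxK hx => ?_
  have hφx := eq_of_nhds_neBot ((hx.continuousAt_comp hφ.continuousAt).clusterPt.mono hlim)
  have hφGx :=
    eq_of_nhds_neBot ((hx.continuousAt_comp (hφ.comp hG).continuousAt).clusterPt.mono hlim')
  by_contra hne
  exact (hlt x hxK hne).ne (hφGx.trans hφx.symm)

section Coercive

variable {ι : Type*} [Fintype ι] {a : ι × ι → ℝ} {γ : ℝ}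

lemma sum_mul_edgeDiff (r : ι × ι → ℝ) (p : ι → ℝ) :
    ∑ e, r e * edgeDiff p e = ∑ k, (∑ j, r (k, j) - ∑ i, r (i, k)) * p k := by
  have hout : ∑ e, r e * p e.1 = ∑ k, (∑ j, r (k, j)) * p k := by
    simp only [Fintype.sum_prod_type, Finset.sum_mul]
  have hin : ∑ e, r e * p e.2 = ∑ k, (∑ i, r (i, k)) * p k := by
    simp only [Fintype.sum_prod_type_right, Finset.sum_mul]
  simp only [edgeDiff_apply, mul_sub, sub_mul, Finset.sum_sub_distrib, hout, hin]

-- Moving the mass `ε` from `j` to `i` in `s` keeps it a nonnegative weight of the same total mass;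
-- this produces the term `ε * (p i - p j)`.
lemma sum_mul_log_add_le_mul_potential {r : ι × ι → ℝ} {s t : ι → ℝ} {ε : ℝ}
    (ha : 0 ≤ a) (hr : 0 ≤ r) (har : ∀ e, a e = 0 → r e = 0) (ht : 0 ≤ t) (hε : 0 ≤ ε)
    (hs : ∀ k, ε ≤ s k) (hbal : ∀ k, ∑ j, r (k, j) + s k = ∑ i, r (i, k) + t k)
    (hs_sum : ∑ k, s k = γ * ∑ e, r e) (ht_sum : ∑ k, t k = γ * ∑ e, r e) (p : ι → ℝ) (i j : ι) :
    ∑ e, r e * Real.log (a e) + ε * (p i - p j) ≤ (∑ e, r e) * potential a γ p := by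
  classical
  have hvertex {s : ι → ℝ} (hs : 0 ≤ s) (x : ι → ℝ) :
      ∑ k, s k * x k ≤ (∑ k, s k) * Real.log (partitionFn 1 x) := by
    simpa using sum_mul_log_add_le zero_le_one hs (fun k hk => absurd hk one_ne_zero) x
  have hedge := sum_mul_log_add_le ha hr har (edgeDiff p)
  set s' : ι → ℝ := s + ε • (Pi.single i 1 - Pi.single j 1) with hs'_def
  have hs' : 0 ≤ s' := fun k => by
    have hsingle (l : ι) : 0 ≤ (Pi.single l 1 : ι → ℝ) k ∧ (Pi.single l 1 : ι → ℝ) k ≤ 1 := by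
      rw [Pi.single_apply]
      split_ifs <;> norm_num
    simp only [hs'_def, Pi.zero_apply, Pi.add_apply, Pi.smul_apply, Pi.sub_apply, smul_eq_mul]
    linarith [hs k, mul_nonneg hε (hsingle i).1, mul_le_mul_of_nonneg_left (hsingle j).2 hε]
  have hs'_sum : ∑ k, s' k = γ * ∑ e, r e := by
    simp [hs'_def, Finset.sum_add_distrib, ← Finset.mul_sum, hs_sum]
  have hs'_pair : ∑ k, s' k * p k = ∑ k, s k * p k + ε * (p i - p j) := by
    simp [hs'_def, add_mul, sub_mul, Finset.sum_add_distrib, mul_assoc, ← Finset.mul_sum,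
      Pi.single_apply]
  have hflow : ∑ e, r e * edgeDiff p e = ∑ k, t k * p k - ∑ k, s k * p k := by
    rw [sum_mul_edgeDiff, ← Finset.sum_sub_distrib]
    refine Finset.sum_congr rfl fun k _ => ?_
    rw [← sub_mul, sub_eq_sub_iff_add_eq_add.2 (by rw [hbal, add_comm])]
  have hp := hvertex hs' p
  have hn := hvertex ht (-p)
  rw [hs'_sum, hs'_pair] at hp
  simp only [ht_sum, Pi.neg_apply, mul_neg, Finset.sum_neg_distrib] at hn
  simp only [mul_add, Finset.sum_add_distrib, hflow] at hedge
  rw [potential]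
  linarith

variable {C ε : ℝ}

lemma isCompact_normalized_sublevel (ha : 0 < a) (hε : 0 < ε)
    (hC : ∀ p i j, C + ε * (p i - p j) ≤ potential a γ p) (i₀ : ι) (s v : ℝ) :
    IsCompact {p : ι → ℝ | p i₀ = s ∧ potential a γ p ≤ v} := by
  have hclosed : IsClosed {p : ι → ℝ | p i₀ = s ∧ potential a γ p ≤ v} :=
    (isClosed_eq (continuous_apply i₀) continuous_const).inter
      (isClosed_le (continuous_potential ha γ) continuous_const)
  refine isCompact_Icc.of_isClosed_subset
    (s := Set.Icc (fun _ => s - (v - C) / ε) fun _ => s + (v - C) / ε) hclosed ?_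
  rintro p ⟨rfl, hp⟩
  refine ⟨fun k => ?_, fun k => ?_⟩
  · rw [sub_le_comm, le_div_iff₀ hε]
    linarith [hC p i₀ k]
  · rw [← sub_le_iff_le_add', le_div_iff₀ hε]
    linarith [hC p k i₀]

lemma exists_balancingMap_eq_self (ha : 0 < a) (hγ : 0 < γ) (hε : 0 < ε)
    (hC : ∀ p i j, C + ε * (p i - p j) ≤ potential a γ p) :
    ∃ p, balancingMap a γ p = p := by
  obtain ⟨i₀⟩ := nonempty_of_weight_pos ha
  obtain ⟨p, ⟨-, hp⟩, hmin⟩ :=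
    (isCompact_normalized_sublevel ha hε hC i₀ 0 (potential a γ 0)).exists_isMinOn
      ⟨0, rfl, le_rfl⟩ (continuous_potential ha γ).continuousOn
  refine ⟨p, by_contra fun hne => ?_⟩
  have hlt := potential_balancingMap_lt ha hγ hne
  set q := balancingMap a γ p + Function.const ι (-balancingMap a γ p i₀) with hq_def
  have hq : potential a γ q = potential a γ (balancingMap a γ p) := potential_add_const ha γ _ _
  have hpq : potential a γ p ≤ potential a γ q :=
    hmin ⟨by simp [hq_def], hq ▸ hlt.le.trans hp⟩
  linarith

lemma tendsto_normalized_iterate (ha : 0 < a) (hγ : 0 < γ) (hε : 0 < ε)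
    (hC : ∀ p i j, C + ε * (p i - p j) ≤ potential a γ p) {p : ι → ℝ}
    (hp : balancingMap a γ p = p) (i₀ : ι) (x : ι → ℝ) :
    Tendsto (fun k => (balancingMap a γ)^[k] x +
      Function.const ι (p i₀ - (balancingMap a γ)^[k] x i₀)) atTop (nhds p) := by
  set F := balancingMap a γ
  let normalize (q : ι → ℝ) : ι → ℝ := q + Function.const ι (p i₀ - q i₀)
  have hnorm_apply (q : ι → ℝ) : normalize q i₀ = p i₀ := by simp [normalize]
  have hnorm_pot (q : ι → ℝ) : potential a γ (normalize q) = potential a γ q :=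
    potential_add_const ha γ _ _
  have hnorm_self {q : ι → ℝ} (hq : q i₀ = p i₀) : normalize q = q := by simp [normalize, hq]
  have hnorm_comm (q : ι → ℝ) : normalize (F (normalize q)) = normalize (F q) := by
    ext k
    simp only [normalize, F, balancingMap_add_const, Pi.add_apply, Function.const_apply]
    ring
  have hmem (k : ℕ) : normalize (F^[k] x) ∈
      {q : ι → ℝ | q i₀ = p i₀ ∧ potential a γ q ≤ potential a γ x} :=
    ⟨hnorm_apply _, (hnorm_pot _).trans_le (potential_iterate_balancingMap_le ha hγ x k)⟩
  have hstep (k : ℕ) : normalize (F^[k + 1] x) = normalize (F (normalize (F^[k] x))) := by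
    rw [Function.iterate_succ_apply', hnorm_comm]
  refine tendsto_nhds_of_strict_descent (isCompact_normalized_sublevel ha hε hC i₀ _ _)
    (G := fun q => normalize (F q)) ?_ (continuous_potential ha γ) ?_ ?_ hmem hstep
  · have hF : Continuous F := (differentiable_balancingMap ha hγ).continuous
    have hnorm : Continuous normalize := continuous_id.add <|
      continuous_pi fun _ => continuous_const.sub (continuous_apply i₀)
    exact hnorm.comp hF
  · rw [hp, hnorm_self rfl]
  · rintro q ⟨hq₀, -⟩ hqp
    rw [hnorm_pot]
    refine potential_balancingMap_lt ha hγ fun hq => hqp ?_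
    obtain ⟨c, rfl⟩ := exists_eq_add_const_of_balancingMap_eq ha hγ hp hq
    rw [Pi.add_apply, Function.const_apply, add_eq_left] at hq₀
    rw [hq₀, Function.const_zero, add_zero]

end Coercive

section Jacobian

variable {ι : Type*} [Fintype ι] {a : ι × ι → ℝ} {γ : ℝ}

/-- The Hessian of `potential a γ` at `p` as a bilinear form. -/
noncomputable def curvature (a : ι × ι → ℝ) (γ : ℝ) (p d e : ι → ℝ) : ℝ :=
  weightedCov (gibbs a (edgeDiff p)) (edgeDiff d) (edgeDiff e) +
    γ * (weightedCov (gibbs 1 p) d e + weightedCov (gibbs 1 (-p)) d e)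

lemma curvature_comm (a : ι × ι → ℝ) (γ : ℝ) (p d e : ι → ℝ) :
    curvature a γ p d e = curvature a γ p e d := by
  simp only [curvature, weightedCov_comm _ d e, weightedCov_comm _ (edgeDiff d)]

lemma curvature_self_nonneg (ha : 0 < a) (hγ : 0 ≤ γ) (p d : ι → ℝ) :
    0 ≤ curvature a γ p d d := by
  have := nonempty_of_weight_pos ha
  have hvertex (x : ι → ℝ) : 0 ≤ weightedCov (gibbs 1 x) d d :=
    weightedCov_self_nonneg (fun i => (gibbs_one_pos x i).le) (sum_gibbs zero_lt_one x) d
  exact add_nonneg (weightedCov_self_nonneg (gibbs_nonneg ha.le _) (sum_gibbs ha _) _)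
    (mul_nonneg hγ (add_nonneg (hvertex p) (hvertex (-p))))

lemma eq_const_of_curvature_self_eq_zero (ha : 0 < a) (hγ : 0 < γ) {p d : ι → ℝ}
    (hd : curvature a γ p d d = 0) : ∃ c : ℝ, d = Function.const ι c := by
  have := nonempty_of_weight_pos ha
  have hvertex (x : ι → ℝ) : 0 ≤ weightedCov (gibbs 1 x) d d :=
    weightedCov_self_nonneg (fun i => (gibbs_one_pos x i).le) (sum_gibbs zero_lt_one x) d
  have hedge := weightedCov_self_nonneg (gibbs_nonneg ha.le (edgeDiff p)) (sum_gibbs ha _)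
    (edgeDiff d)
  have hzero : weightedCov (gibbs 1 p) d d = 0 := by
    rw [curvature] at hd
    nlinarith [hvertex p, hvertex (-p), mul_nonneg hγ.le (hvertex p),
      mul_nonneg hγ.le (hvertex (-p))]
  exact ⟨_, funext
    (eq_of_weightedCov_self_eq_zero (gibbs_one_pos p) (sum_gibbs zero_lt_one p) hzero)⟩

lemma half_curvature_self_lt (ha : 0 < a) (hγ : 0 < γ) {p : ι → ℝ} (hp : balancingMap a γ p = p)
    {d : ι → ℝ} (hd : d ≠ 0) :
    curvature a γ p d d / 2 < 2 * ∑ k, outflow a γ p k * (d k * d k) := by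
  obtain ⟨k, hk⟩ := Function.ne_iff.1 hd
  have hmass := sum_outflow_mul_add_sum_inflow_mul a γ p (fun k => d k * d k) fun k => d k * d k
  rw [(balancingMap_eq_self_iff ha.le hγ p).1 hp, ← two_mul] at hmass
  have hedge : weightedCov (gibbs a (edgeDiff p)) (edgeDiff d) (edgeDiff d) ≤
      2 * ∑ e, gibbs a (edgeDiff p) e * (d e.1 * d e.1 + d e.2 * d e.2) := by
    refine (weightedCov_self_le _ _).trans ?_
    rw [Finset.mul_sum]
    refine Finset.sum_le_sum fun e _ => ?_
    rw [mul_left_comm, edgeDiff_apply]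
    exact mul_le_mul_of_nonneg_left (by nlinarith [sq_nonneg (d e.1 + d e.2)])
      (gibbs_nonneg ha.le _ e)
  have hvertex (x : ι → ℝ) :
      weightedCov (gibbs 1 x) d d ≤ ∑ i, gibbs 1 x i * (d i * d i) ∧
        0 < ∑ i, gibbs 1 x i * (d i * d i) := by
    refine ⟨by simpa only [sq] using weightedCov_self_le (gibbs 1 x) d, ?_⟩
    exact Finset.sum_pos' (fun i _ => mul_nonneg (gibbs_one_pos x i).le (mul_self_nonneg _))
      ⟨k, Finset.mem_univ k, mul_pos (gibbs_one_pos x k) (mul_self_pos.2 hk)⟩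
  rw [hmass, curvature]
  obtain ⟨hp_le, hp_pos⟩ := hvertex p
  obtain ⟨hn_le, hn_pos⟩ := hvertex (-p)
  nlinarith [mul_le_mul_of_nonneg_left (add_le_add hp_le hn_le) hγ.le,
    mul_pos hγ (add_pos hp_pos hn_pos)]

lemma hasLineDerivAt_sum_outflow_sub_inflow_mul (ha : 0 < a) (γ : ℝ) (p e d : ι → ℝ) :
    HasLineDerivAt ℝ (fun p => ∑ k, (outflow a γ p k - inflow a γ p k) * e k)
      (curvature a γ p e d) p d := by
  have := nonempty_of_weight_pos ha
  have hmass (q : ι → ℝ) : ∑ k, (outflow a γ q k - inflow a γ q k) * e k =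
      ∑ i, gibbs a (edgeDiff q) i * edgeDiff e i +
        γ * (∑ i, gibbs 1 q i * e i - ∑ i, gibbs 1 (-q) i * e i) := by
    have h := sum_outflow_mul_add_sum_inflow_mul a γ q e (-e)
    simpa only [Pi.neg_apply, mul_neg, Finset.sum_neg_distrib, ← sub_eq_add_neg, sub_mul,
      Finset.sum_sub_distrib, edgeDiff_apply] using h
  have hedge := hasLineDerivAt_sum_gibbs_mul ha (edgeDiff e) (edgeDiff p) (edgeDiff d)
  have hp := hasLineDerivAt_sum_gibbs_mul zero_lt_one e p d
  have hn := hasLineDerivAt_sum_gibbs_mul zero_lt_one e (-p) (-d)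
  have hcov_neg : weightedCov (gibbs 1 (-p)) e (-d) = -weightedCov (gibbs 1 (-p)) e d := by
    simp only [weightedCov, Pi.neg_apply, mul_neg, Finset.sum_neg_distrib]
    ring
  simp only [HasLineDerivAt, hmass, hcov_neg, smul_neg, ← neg_add] at hedge hp hn ⊢
  simp only [← map_smul, ← map_add] at hedge
  simpa only [curvature, sub_neg_eq_add] using hedge.fun_add ((hp.fun_sub hn).const_mul γ)

lemma fderiv_balancingMap_apply (ha : 0 < a) (hγ : 0 < γ) {p : ι → ℝ}
    (hp : balancingMap a γ p = p) (d : ι → ℝ) (k : ι) :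
    outflow a γ p k * fderiv ℝ (balancingMap a γ) p d k = outflow a γ p k * d k -
      (fderiv ℝ (outflow a γ · k) p d - fderiv ℝ (inflow a γ · k) p d) / 2 := by
  have hfix := congrFun ((balancingMap_eq_self_iff ha.le hγ p).1 hp) k
  have hm := (outflow_pos ha.le hγ p k).ne'
  have hout := (differentiable_outflow ha γ k p).hasFDerivAt
  have hin := (differentiable_inflow ha γ k p).hasFDerivAt
  have hF : HasFDerivAt (balancingMap a γ · k) _ p :=
    (hasFDerivAt_apply k p).fun_add
      (((hin.log (hfix ▸ hm)).fun_sub (hout.log hm)).const_mul (1 / 2))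
  have hFk := hasFDerivAt_pi'.1 (differentiable_balancingMap ha hγ p).hasFDerivAt k
  have hval := DFunLike.congr_fun (hFk.unique hF) d
  simp only [ContinuousLinearMap.comp_apply, ContinuousLinearMap.proj_apply, hfix,
    _root_.add_apply, _root_.sub_apply, _root_.smul_apply, smul_eq_mul] at hval
  rw [hval]
  field_simp
  ring

lemma sum_outflow_mul_mul_fderiv_balancingMap (ha : 0 < a) (hγ : 0 < γ) {p : ι → ℝ}
    (hp : balancingMap a γ p = p) (e d : ι → ℝ) :
    ∑ k, outflow a γ p k * (e k * fderiv ℝ (balancingMap a γ) p d k) =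
      ∑ k, outflow a γ p k * (e k * d k) - curvature a γ p e d / 2 := by
  have hline : HasLineDerivAt ℝ (fun p => ∑ k, (outflow a γ p k - inflow a γ p k) * e k)
      (∑ k, (fderiv ℝ (outflow a γ · k) p d - fderiv ℝ (inflow a γ · k) p d) * e k) p d :=
    .fun_sum fun k _ => (HasDerivAt.fun_sub
      ((differentiable_outflow ha γ k p).hasFDerivAt.hasLineDerivAt d)
      ((differentiable_inflow ha γ k p).hasFDerivAt.hasLineDerivAt d)).mul_const (e k)
  rw [(hasLineDerivAt_sum_outflow_sub_inflow_mul ha γ p e d).unique hline, Finset.sum_div,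
    ← Finset.sum_sub_distrib]
  refine Finset.sum_congr rfl fun k _ => ?_
  rw [mul_left_comm, fderiv_balancingMap_apply ha hγ hp]
  ring

lemma fderiv_balancingMap_const (ha : 0 < a) (hγ : 0 < γ) (p : ι → ℝ) (c : ℝ) :
    fderiv ℝ (balancingMap a γ) p (Function.const ι c) = Function.const ι c := by
  have hF := (differentiable_balancingMap ha hγ p).hasFDerivAt.hasLineDerivAt (Function.const ι c)
  refine hF.unique ?_
  have hshift (t : ℝ) : balancingMap a γ (p + t • Function.const ι c) =
      balancingMap a γ p + t • Function.const ι c := balancingMap_add_const a γ p (t • c)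
  simp only [HasLineDerivAt, hshift]
  simpa using ((hasDerivAt_id (0 : ℝ)).smul_const (Function.const ι c)).const_add
    (balancingMap a γ p)

lemma fderiv_balancingMap_eq_self_iff (ha : 0 < a) (hγ : 0 < γ) {p : ι → ℝ}
    (hp : balancingMap a γ p = p) (d : ι → ℝ) :
    fderiv ℝ (balancingMap a γ) p d = d ↔ ∃ c : ℝ, d = Function.const ι c := by
  refine ⟨fun hd => eq_const_of_curvature_self_eq_zero ha hγ (p := p) ?_, ?_⟩
  · have h := sum_outflow_mul_mul_fderiv_balancingMap ha hγ hp d d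
    rw [hd] at h
    linarith
  · rintro ⟨c, rfl⟩
    exact fderiv_balancingMap_const ha hγ p c

lemma abs_lt_one_of_hasEigenvalue_fderiv_balancingMap (ha : 0 < a) (hγ : 0 < γ) {p : ι → ℝ}
    (hp : balancingMap a γ p = p) {μ : ℝ}
    (hμ : Module.End.HasEigenvalue (fderiv ℝ (balancingMap a γ) p : (ι → ℝ) →ₗ[ℝ] (ι → ℝ)) μ)
    (hμ_ne : μ ≠ 1) : |μ| < 1 := by
  obtain ⟨d, hdμ, hd⟩ := hμ.exists_hasEigenvector
  replace hdμ : fderiv ℝ (balancingMap a γ) p d = μ • d := Module.End.mem_eigenspace_iff.1 hdμ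
  have hform := sum_outflow_mul_mul_fderiv_balancingMap ha hγ hp d d
  simp only [hdμ, Pi.smul_apply, smul_eq_mul, mul_left_comm _ μ, ← Finset.mul_sum] at hform
  have hnonneg := curvature_self_nonneg ha hγ.le p d
  have hlt := half_curvature_self_lt ha hγ hp hd
  have hpos : 0 < ∑ k, outflow a γ p k * (d k * d k) := by linarith
  have hle : μ ≤ 1 := by
    by_contra! h
    nlinarith [mul_pos (sub_pos.2 h) hpos]
  refine abs_lt.2 ⟨?_, hle.lt_of_ne hμ_ne⟩
  by_contra! h
  nlinarith [mul_nonneg (sub_nonneg.2 h) hpos.le]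

end Jacobian

section Spectral

open Module.End

lemma norm_starProjection_eigenspace_orthogonal_apply_le {𝕜 E : Type*} [RCLike 𝕜]
    [NormedAddCommGroup E] [InnerProductSpace 𝕜 E] [FiniteDimensional 𝕜 E] {T : E →ₗ[𝕜] E}
    (hT : T.IsSymmetric) {ν : 𝕜} {r : ℝ} (hr : 0 ≤ r)
    (hspec : ∀ μ, HasEigenvalue T μ → μ ≠ ν → ‖μ‖ ≤ r) (z : E) :
    ‖(eigenspace T ν)ᗮ.starProjection (T z)‖ ≤ r * ‖z‖ := by
  let b := hT.eigenvectorBasis rfl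
  have hcoord (i) : ‖inner 𝕜 (b i) ((eigenspace T ν)ᗮ.starProjection (T z))‖ ≤
      r * ‖inner 𝕜 (b i) z‖ := by
    have hb := hT.apply_eigenvectorBasis rfl i
    rw [← Submodule.inner_starProjection_left_eq_right]
    obtain hν | hν := eq_or_ne (hT.eigenvalues rfl i : 𝕜) ν
    · have hmem : b i ∈ eigenspace T ν := mem_eigenspace_iff.2 (hν ▸ hb)
      rw [Submodule.starProjection_orthogonal_apply_eq_zero hmem, inner_zero_left, norm_zero]
      positivity
    · have hmem : b i ∈ (eigenspace T ν)ᗮ :=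
        hT.orthogonalFamily_eigenspaces.isOrtho hν (mem_eigenspace_iff.2 hb)
      rw [Submodule.starProjection_eq_self_iff.2 hmem, ← hT, hb, inner_smul_left, norm_mul,
        RCLike.norm_conj]
      exact mul_le_mul_of_nonneg_right (hspec _ (hT.hasEigenvalue_eigenvalues rfl i) hν)
        (norm_nonneg _)
  refine le_of_sq_le_sq ?_ (by positivity)
  rw [mul_pow, ← b.sum_sq_norm_inner_right, ← b.sum_sq_norm_inner_right z, Finset.mul_sum]
  refine Finset.sum_le_sum fun i _ => ?_
  rw [← mul_pow]
  exact pow_le_pow_left₀ (norm_nonneg _) (hcoord i) 2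

lemma mem_spectrum_map_toMatrix'_iff {K L m : Type*} [Field K] [Field L] [Fintype m]
    [DecidableEq m] {J : (m → K) →ₗ[K] (m → K)} (hJ : J.charpoly.Splits) (f : K →+* L) {μ : L} :
    μ ∈ spectrum L ((LinearMap.toMatrix' J).map f) ↔ ∃ x, HasEigenvalue J x ∧ f x = μ := by
  rw [Matrix.mem_spectrum_iff_isRoot_charpoly, Matrix.charpoly_map,
    ← LinearMap.toMatrix_eq_toMatrix', LinearMap.charpoly_toMatrix J]
  simp only [hasEigenvalue_iff_isRoot_charpoly]
  refine ⟨fun hμ => ?_, ?_⟩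
  · obtain ⟨x, rfl⟩ := hJ.mem_range_of_isRoot J.charpoly_monic.ne_zero hμ
    exact ⟨x, hμ.of_map f.injective, rfl⟩
  · rintro ⟨x, hx, rfl⟩
    exact hx.map

section SecondEigRadius

variable {n : ℕ} {J : (Fin n → ℝ) →ₗ[ℝ] (Fin n → ℝ)} {r : ℝ}

lemma finite_norm_spectrum_ne_one (M : Matrix (Fin n) (Fin n) ℝ) :
    {r : ℝ | ∃ μ : ℂ, μ ∈ spectrum ℂ (M.map Complex.ofReal) ∧ μ ≠ 1 ∧ r = ‖μ‖}.Finite := by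
  refine ((Matrix.finite_spectrum (M.map Complex.ofReal)).image norm).subset ?_
  rintro r ⟨μ, hμ, -, rfl⟩
  exact Set.mem_image_of_mem norm hμ

lemma secondEigRadius_nonneg (M : Matrix (Fin n) (Fin n) ℝ) : 0 ≤ secondEigRadius M := by
  refine Real.sSup_nonneg ?_
  rintro r ⟨μ, -, -, rfl⟩
  exact norm_nonneg μ

lemma abs_le_secondEigRadius (hJ : J.charpoly.Splits) {μ : ℝ} (hμ : HasEigenvalue J μ)
    (hμ_ne : μ ≠ 1) : |μ| ≤ secondEigRadius (LinearMap.toMatrix' J) := by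
  rw [← Real.norm_eq_abs, ← Complex.norm_real]
  refine le_csSup (finite_norm_spectrum_ne_one _).bddAbove ⟨μ, ?_, ?_, rfl⟩
  · exact (mem_spectrum_map_toMatrix'_iff hJ Complex.ofRealHom).2 ⟨μ, hμ, rfl⟩
  · exact_mod_cast hμ_ne

lemma secondEigRadius_lt (hJ : J.charpoly.Splits) (hr : 0 < r)
    (h : ∀ μ : ℝ, HasEigenvalue J μ → μ ≠ 1 → |μ| < r) :
    secondEigRadius (LinearMap.toMatrix' J) < r := by
  obtain hempty | hne := Set.eq_empty_or_nonempty {r : ℝ | ∃ μ : ℂ,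
    μ ∈ spectrum ℂ ((LinearMap.toMatrix' J).map Complex.ofReal) ∧ μ ≠ 1 ∧ r = ‖μ‖}
  · rwa [secondEigRadius, hempty, Real.sSup_empty]
  · obtain ⟨μ, hμ, hμ_ne, hmax⟩ := hne.csSup_mem (finite_norm_spectrum_ne_one _)
    obtain ⟨x, hx, rfl⟩ := (mem_spectrum_map_toMatrix'_iff hJ Complex.ofRealHom).1 hμ
    refine hmax.trans_lt ?_
    rw [Complex.ofRealHom_eq_coe, Complex.norm_real, Real.norm_eq_abs]
    exact h x hx fun hx1 => hμ_ne (by rw [hx1, map_one])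

end SecondEigRadius

section Weighted

variable {ι : Type*} [Fintype ι] {m : ι → ℝ}

/-- The isometry onto Euclidean space of `ι → ℝ` with the weighted inner product
`∑ k, m k * (d k * e k)`. -/
noncomputable def weightEquiv (m : ι → ℝ) (hm : ∀ k, 0 < m k) : (ι → ℝ) ≃ₗ[ℝ] EuclideanSpace ℝ ι :=
  (LinearEquiv.piCongrRight fun k =>
      LinearEquiv.smulOfNeZero ℝ ℝ (√(m k)) (Real.sqrt_ne_zero'.2 (hm k))) ≪≫ₗ
    (WithLp.linearEquiv 2 ℝ (ι → ℝ)).symm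

lemma inner_weightEquiv (hm : ∀ k, 0 < m k) (d e : ι → ℝ) :
    inner ℝ (weightEquiv m hm d) (weightEquiv m hm e) = ∑ k, m k * (d k * e k) := by
  rw [PiLp.inner_apply]
  refine Finset.sum_congr rfl fun k _ => ?_
  change √(m k) * e k * (√(m k) * d k) = _
  rw [mul_mul_mul_comm, Real.mul_self_sqrt (hm k).le, mul_comm (e k)]

lemma isSymmetric_conj_weightEquiv (hm : ∀ k, 0 < m k) {J : (ι → ℝ) →ₗ[ℝ] (ι → ℝ)}
    (hJ : ∀ d e, ∑ k, m k * (J d k * e k) = ∑ k, m k * (d k * J e k)) :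
    ((weightEquiv m hm).conj J).IsSymmetric := by
  intro x y
  obtain ⟨d, rfl⟩ := (weightEquiv m hm).surjective x
  obtain ⟨e, rfl⟩ := (weightEquiv m hm).surjective y
  simpa only [LinearEquiv.conj_apply_apply, LinearEquiv.symm_apply_apply, inner_weightEquiv]
    using hJ d e

lemma splits_charpoly_of_weighted_symmetric (hm : ∀ k, 0 < m k) {J : (ι → ℝ) →ₗ[ℝ] (ι → ℝ)}
    (hJ : ∀ d e, ∑ k, m k * (J d k * e k) = ∑ k, m k * (d k * J e k)) : J.charpoly.Splits := by
  rw [← (weightEquiv m hm).charpoly_conj]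
  exact (isSymmetric_conj_weightEquiv hm hJ).splits_charpoly

lemma exists_quotient_norm_le (hm : ∀ k, 0 < m k) {J : (ι → ℝ) →L[ℝ] (ι → ℝ)}
    (hJ : ∀ d e, ∑ k, m k * (J d k * e k) = ∑ k, m k * (d k * J e k)) {ν ρ : ℝ} (hρ0 : 0 ≤ ρ)
    (hρ : ∀ μ, HasEigenvalue (J : (ι → ℝ) →ₗ[ℝ] (ι → ℝ)) μ → μ ≠ ν → |μ| ≤ ρ) :
    ∃ (π : (ι → ℝ) →L[ℝ] EuclideanSpace ℝ ι) (s : EuclideanSpace ℝ ι →L[ℝ] (ι → ℝ)),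
      (∀ d, π d = 0 ↔ J d = ν • d) ∧ (∀ d, π (s (π d)) = π d) ∧ ‖π ∘L J ∘L s‖ ≤ ρ := by
  let L := (weightEquiv m hm).toContinuousLinearEquiv
  let T : Module.End ℝ (EuclideanSpace ℝ ι) := (weightEquiv m hm).conj J
  have hT : T.IsSymmetric := isSymmetric_conj_weightEquiv hm hJ
  have hTρ (μ : ℝ) (hμ : HasEigenvalue T μ) (hμ_ne : μ ≠ ν) : ‖μ‖ ≤ ρ := by
    rw [hasEigenvalue_iff_isRoot_charpoly, (weightEquiv m hm).charpoly_conj,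
      ← hasEigenvalue_iff_isRoot_charpoly] at hμ
    exact hρ μ hμ hμ_ne
  have hTL (d : ι → ℝ) : T (L d) = L (J d) :=
    congrArg (fun d => L (J d)) (L.symm_apply_apply d)
  let P := (eigenspace T ν)ᗮ.starProjection
  refine ⟨P ∘L L, L.symm, fun d => ?_, fun d => ?_, ?_⟩
  · change P (L d) = 0 ↔ _
    rw [Submodule.starProjection_apply_eq_zero_iff, Submodule.orthogonal_orthogonal,
      mem_eigenspace_iff, hTL, ← map_smul, L.injective.eq_iff]
  · change P (L (L.symm (P (L d)))) = P (L d)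
    rw [L.apply_symm_apply]
    exact Submodule.starProjection_eq_self_iff.2 (Submodule.starProjection_apply_mem _ _)
  · exact ContinuousLinearMap.opNorm_le_bound _ hρ0
      (norm_starProjection_eigenspace_orthogonal_apply_le hT hρ0 hTρ)

end Weighted
end Spectral

section Rate

open Asymptotics Topology

lemma isBigO_pow_of_norm_succ_le {E : Type*} [SeminormedAddCommGroup E] {u : ℕ → E} {r : ℝ}
    (hr : 0 < r) (hu : ∀ᶠ k in atTop, ‖u (k + 1)‖ ≤ r * ‖u k‖) :
    u =O[atTop] fun k => r ^ k := by
  obtain ⟨N, hN⟩ := eventually_atTop.1 hu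
  refine .of_bound (‖u N‖ / r ^ N) (eventually_atTop.2 ⟨N, fun k hk => ?_⟩)
  rw [norm_pow, Real.norm_of_nonneg hr.le]
  induction k, hk using Nat.le_induction with
  | base => rw [div_mul_cancel₀ _ (pow_pos hr N).ne']
  | succ k hk ih =>
    calc ‖u (k + 1)‖ ≤ r * ‖u k‖ := hN k hk
      _ ≤ r * (‖u N‖ / r ^ N * r ^ k) := by gcongr
      _ = ‖u N‖ / r ^ N * r ^ (k + 1) := by ring

section Ostrowski

variable {𝕜 V E : Type*} [NontriviallyNormedField 𝕜] [NormedAddCommGroup V] [NormedSpace 𝕜 V]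
  [NormedAddCommGroup E] [NormedSpace 𝕜 E] {r : ℝ}

lemma isBigO_pow_of_hasFDerivAt_zero {G : E → E} {G' : E →L[𝕜] E} (hG : HasFDerivAt G G' 0)
    (hG0 : G 0 = 0) (hr : ‖G'‖ < r) {w : ℕ → E} (hw : ∀ k, w (k + 1) = G (w k))
    (hlim : Tendsto w atTop (𝓝 0)) : w =O[atTop] fun k => r ^ k := by
  refine isBigO_pow_of_norm_succ_le ((norm_nonneg G').trans_lt hr) ?_
  filter_upwards [hlim.eventually (hG.isLittleO.def (sub_pos.2 hr))] with k hk
  rw [hG0, sub_zero, sub_zero] at hk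
  calc ‖w (k + 1)‖ = ‖(G (w k) - G' (w k)) + G' (w k)‖ := by rw [hw, sub_add_cancel]
    _ ≤ (r - ‖G'‖) * ‖w k‖ + ‖G'‖ * ‖w k‖ := norm_add_le_of_le hk (G'.le_opNorm _)
    _ = r * ‖w k‖ := by ring

/- The iteration descends to the range of `π`, where it contracts by `π ∘ J ∘ s`, and the increment
`x (k + 1) - x k` is a function of `π (x k - p)`. -/
lemma isBigO_iterate_succ_sub_of_equivariant {F : V → V} {J : V →L[𝕜] V} {p : V} {π : V →L[𝕜] E}
    {s : E →L[𝕜] V} (hs : ∀ v, π (s (π v)) = π v) (hF : ∀ x d, π d = 0 → F (x + d) = F x + d)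
    (hJ : HasFDerivAt F J p) (hp : F p = p) (hr : ‖π ∘L J ∘L s‖ < r) {x : V}
    (hlim : Tendsto (fun k => π (F^[k] x - p)) atTop (𝓝 0)) :
    (fun k => F^[k + 1] x - F^[k] x) =O[atTop] fun k => r ^ k := by
  have hlift : HasFDerivAt (fun w => F (p + s w)) (J ∘L s) 0 :=
    HasFDerivAt.comp 0 (by simpa using hJ) (s.hasFDerivAt.const_add p)
  set w : ℕ → E := fun k => π (F^[k] x - p)
  have hker (k : ℕ) : π (F^[k] x - p - s (w k)) = 0 := by rw [map_sub, hs, sub_self]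
  have hsucc (k : ℕ) : F^[k + 1] x = F (p + s (w k)) + (F^[k] x - p - s (w k)) := by
    rw [Function.iterate_succ_apply', ← hF _ _ (hker k)]
    congr 1
    abel
  have hw : w =O[atTop] fun k => r ^ k := by
    refine isBigO_pow_of_hasFDerivAt_zero (G := fun w => π (F (p + s w) - p))
      (π.hasFDerivAt.comp 0 (hlift.sub_const p)) (by simp [hp]) hr (fun k => ?_) hlim
    simp only [w, hsucc k, add_sub_right_comm _ _ p, map_add, hker, add_zero]
  have hincr : (fun k => F (p + s (w k)) - (p + s (w k))) =O[atTop] w := by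
    simpa [Function.comp_def, hp] using
      (hlift.fun_sub (s.hasFDerivAt.const_add p)).isBigO_sub.comp_tendsto hlim
  refine (hincr.congr_left fun k => ?_).trans hw
  rw [hsucc]
  abel

end Ostrowski

section Limit

variable {E : Type*} [NormedAddCommGroup E] {x : ℕ → E} {r : ℝ}

lemma exists_tendsto_of_isBigO_succ_sub [CompleteSpace E] (hr : 0 < r) (hr1 : r < 1)
    (h : (fun k => x (k + 1) - x k) =O[atTop] fun k => r ^ k) : ∃ y, Tendsto x atTop (𝓝 y) := by
  obtain ⟨C, -, hC⟩ := bound_of_isBigO_nat_atTop h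
  refine cauchySeq_tendsto_of_complete (cauchySeq_of_le_geometric r C hr1 fun k => ?_)
  rw [dist_comm, dist_eq_norm]
  simpa [abs_of_pos hr] using hC (pow_pos hr k).ne'

lemma isBigO_sub_of_isBigO_succ_sub (hr : 0 < r) (hr1 : r < 1)
    (h : (fun k => x (k + 1) - x k) =O[atTop] fun k => r ^ k) {y : E}
    (hy : Tendsto x atTop (𝓝 y)) : (fun k => x k - y) =O[atTop] fun k => r ^ k := by
  obtain ⟨C, -, hC⟩ := bound_of_isBigO_nat_atTop h
  have hdist (k : ℕ) : dist (x k) (x (k + 1)) ≤ C * r ^ k := by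
    rw [dist_comm, dist_eq_norm]
    simpa [abs_of_pos hr] using hC (pow_pos hr k).ne'
  refine .of_bound (C / (1 - r)) (.of_forall fun k => ?_)
  rw [← dist_eq_norm, norm_pow, Real.norm_of_nonneg hr.le, div_mul_eq_mul_div]
  exact dist_le_of_le_geometric_of_tendsto r C hr1 hdist hy k

lemma limsup_norm_rpow_le_of_isBigO_pow (hr : 0 < r) (h : x =O[atTop] fun k => r ^ k) :
    limsup (fun k : ℕ => ‖x k‖ ^ (1 / (k : ℝ))) atTop ≤ r := by
  obtain ⟨C, hC0, hC⟩ := bound_of_isBigO_nat_atTop h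
  have hroot : Tendsto (fun k : ℕ => C ^ (1 / (k : ℝ)) * r) atTop (𝓝 r) := by
    simpa using (tendsto_const_nhds.rpow tendsto_one_div_atTop_nhds_zero_nat
      (Or.inl hC0.ne')).mul_const r
  rw [← hroot.limsup_eq]
  refine limsup_le_limsup ?_ (isCoboundedUnder_le_of_le atTop (x := 0) fun k => by positivity)
    hroot.isBoundedUnder_le
  filter_upwards [eventually_ne_atTop 0] with k hk
  have hbound : ‖x k‖ ≤ C * r ^ k := by simpa [abs_of_pos hr] using hC (pow_pos hr k).ne'
  calc ‖x k‖ ^ (1 / (k : ℝ)) ≤ (C * r ^ k) ^ (1 / (k : ℝ)) := by gcongr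
    _ = C ^ (1 / (k : ℝ)) * r := by
      rw [Real.mul_rpow hC0.le (by positivity), one_div, Real.pow_rpow_inv_natCast hr.le hk]

lemma limsup_norm_rpow_le_of_forall_isBigO_pow {ρ b : ℝ} (hρ : 0 ≤ ρ) (hb : ρ < b)
    (h : ∀ r, ρ < r → r < b → x =O[atTop] fun k => r ^ k) :
    limsup (fun k : ℕ => ‖x k‖ ^ (1 / (k : ℝ))) atTop ≤ ρ := by
  refine le_of_forall_gt_imp_ge_of_dense fun r hr => ?_
  obtain ⟨s, hρs, hs⟩ := exists_between (lt_min hr hb)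
  exact (limsup_norm_rpow_le_of_isBigO_pow (hρ.trans_lt hρs)
    (h s hρs (hs.trans_le (min_le_right r b)))).trans (hs.le.trans (min_le_left r b))

end Limit

lemma isBigO_exp_comp_sub {ι : Type*} [Fintype ι] {x : ℕ → ι → ℝ} {y : ι → ℝ}
    (hx : Tendsto x atTop (𝓝 y)) :
    (fun k => (fun i => Real.exp (x k i)) - fun i => Real.exp (y i)) =O[atTop]
      fun k => x k - y := by
  have hexp : DifferentiableAt ℝ (fun (x : ι → ℝ) i => Real.exp (x i)) y := by fun_prop
  exact hexp.isBigO_sub.comp_tendsto hx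

end Rate

section Convergence

open Asymptotics Topology Module.End

variable {ι : Type*} [Fintype ι] {a : ι × ι → ℝ} {γ : ℝ} {p : ι → ℝ}

lemma sum_outflow_mul_fderiv_balancingMap_mul (ha : 0 < a) (hγ : 0 < γ)
    (hp : balancingMap a γ p = p) (d e : ι → ℝ) :
    ∑ k, outflow a γ p k * (fderiv ℝ (balancingMap a γ) p d k * e k) =
      ∑ k, outflow a γ p k * (d k * fderiv ℝ (balancingMap a γ) p e k) := by
  simp only [mul_comm _ (e _)]
  rw [sum_outflow_mul_mul_fderiv_balancingMap ha hγ hp,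
    sum_outflow_mul_mul_fderiv_balancingMap ha hγ hp, curvature_comm]
  simp only [mul_comm (e _)]

lemma splits_charpoly_fderiv_balancingMap (ha : 0 < a) (hγ : 0 < γ)
    (hp : balancingMap a γ p = p) :
    (fderiv ℝ (balancingMap a γ) p : (ι → ℝ) →ₗ[ℝ] (ι → ℝ)).charpoly.Splits :=
  splits_charpoly_of_weighted_symmetric (outflow_pos ha.le hγ p)
    (sum_outflow_mul_fderiv_balancingMap_mul ha hγ hp)

lemma isBigO_iterate_balancingMap_succ_sub (ha : 0 < a) (hγ : 0 < γ)
    (hp : balancingMap a γ p = p) {ρ r : ℝ} (hρ0 : 0 ≤ ρ)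
    (hρ : ∀ μ, HasEigenvalue (fderiv ℝ (balancingMap a γ) p : (ι → ℝ) →ₗ[ℝ] (ι → ℝ)) μ →
      μ ≠ 1 → |μ| ≤ ρ)
    (hr : ρ < r) {x : ι → ℝ} {c : ℕ → ℝ}
    (hc : Tendsto (fun k => (balancingMap a γ)^[k] x + Function.const ι (c k)) atTop (𝓝 p)) :
    (fun k => (balancingMap a γ)^[k + 1] x - (balancingMap a γ)^[k] x) =O[atTop]
      fun k => r ^ k := by
  obtain ⟨π, s, hπ, hs, hnorm⟩ := exists_quotient_norm_le (outflow_pos ha.le hγ p)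
    (sum_outflow_mul_fderiv_balancingMap_mul ha hγ hp) hρ0 hρ
  have hker (d : ι → ℝ) : π d = 0 ↔ ∃ c : ℝ, d = Function.const ι c := by
    rw [hπ, one_smul, fderiv_balancingMap_eq_self_iff ha hγ hp]
  refine isBigO_iterate_succ_sub_of_equivariant hs (fun x d hd => ?_)
    (differentiable_balancingMap ha hγ p).hasFDerivAt hp (hnorm.trans_lt hr) ?_
  · obtain ⟨c, rfl⟩ := (hker d).1 hd
    exact balancingMap_add_const a γ x c
  · refine (map_zero π ▸ sub_self p ▸
      (π.continuous.tendsto _).comp (hc.sub_const p)).congr fun k => ?_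
    rw [Function.comp_apply, add_sub_right_comm, map_add, (hker _).2 ⟨c k, rfl⟩, add_zero]

lemma exists_tendsto_iterate_balancingMap (ha : 0 < a) (hγ : 0 < γ)
    (hp : balancingMap a γ p = p) {C ε : ℝ} (hε : 0 < ε)
    (hC : ∀ p i j, C + ε * (p i - p j) ≤ potential a γ p) {ρ : ℝ} (hρ0 : 0 ≤ ρ) (hρ1 : ρ < 1)
    (hρ : ∀ μ, HasEigenvalue (fderiv ℝ (balancingMap a γ) p : (ι → ℝ) →ₗ[ℝ] (ι → ℝ)) μ →
      μ ≠ 1 → |μ| ≤ ρ) (x : ι → ℝ) :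
    ∃ y, balancingMap a γ y = y ∧ Tendsto (fun k => (balancingMap a γ)^[k] x) atTop (𝓝 y) ∧
      ∀ r, ρ < r → r < 1 →
        (fun k => (balancingMap a γ)^[k] x - y) =O[atTop] fun k => r ^ k := by
  obtain ⟨i₀⟩ := nonempty_of_weight_pos ha
  have hincr (r : ℝ) (hr : ρ < r) := isBigO_iterate_balancingMap_succ_sub ha hγ hp hρ0 hρ hr
    (tendsto_normalized_iterate ha hγ hε hC hp i₀ x)
  obtain ⟨r, hρr, hr1⟩ := exists_between hρ1
  obtain ⟨y, hy⟩ := exists_tendsto_of_isBigO_succ_sub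
    (x := fun k => (balancingMap a γ)^[k] x) (hρ0.trans_lt hρr) hr1 (hincr r hρr)
  exact ⟨y, isFixedPt_of_tendsto_iterate hy (differentiable_balancingMap ha hγ y).continuousAt, hy,
    fun r hr hr1 => isBigO_sub_of_isBigO_succ_sub (hρ0.trans_lt hr) hr1 (hincr r hr) hy⟩

end Convergence

section EffHotsMap

variable {n : ℕ} {A : Matrix (Fin n) (Fin n) ℝ} {α : ℝ}

/-- The entries of `A` as weights on the edges of the complete digraph. -/
def edgeWeight {ι : Type*} (A : Matrix ι ι ℝ) (e : ι × ι) : ℝ :=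
  A e.1 e.2

lemma edgeWeight_pos {ι : Type*} {A : Matrix ι ι ℝ} (hA : ∀ i j, 0 ≤ A i j) (hA0 : A ≠ 0) :
    0 < edgeWeight A := by
  refine lt_of_le_of_ne (fun e => hA e.1 e.2) fun h => hA0 ?_
  ext i j
  exact (congrFun h (i, j)).symm

lemma sigmaFun_eq_partitionFn (A : Matrix (Fin n) (Fin n) ℝ) (p : Fin n → ℝ) :
    sigmaFun A p = partitionFn (edgeWeight A) (edgeDiff p) := by
  rw [partitionFn, Fintype.sum_prod_type]
  rfl

lemma effHotsMap_eq_balancingMap (ha : 0 < edgeWeight A) (hγ : 0 < (1 - α) / (2 * α - 1)) :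
    effHotsMap A α = balancingMap (edgeWeight A) ((1 - α) / (2 * α - 1)) := by
  funext p k
  have hσ := (partitionFn_pos ha (edgeDiff p)).ne'
  have hin := (inflow_pos ha.le hγ p k).ne'
  have hout := (outflow_pos ha.le hγ p k).ne'
  have hnum := exp_mul_partitionFn_mul_inflow ha ((1 - α) / (2 * α - 1)) p k
  have hden := exp_neg_mul_partitionFn_mul_outflow ha ((1 - α) / (2 * α - 1)) p k
  simp only [edgeWeight] at hnum hden
  rw [effHotsMap, balancingMap, sigmaFun_eq_partitionFn, ← hnum, ← hden,
    Real.log_mul (Real.exp_pos _).ne' (mul_ne_zero hσ hin),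
    Real.log_mul (Real.exp_pos _).ne' (mul_ne_zero hσ hout), Real.log_mul hσ hin,
    Real.log_mul hσ hout, Real.log_exp, Real.log_exp]
  ring

lemma exists_le_potential_of_feasibleFlow (ha : 0 < edgeWeight A) (hα : 1 / 2 < α)
    {ρ : Matrix (Fin (n + 1)) (Fin (n + 1)) ℝ} (hρ : FeasibleFlow A α ρ) :
    ∃ C ε : ℝ, 0 < ε ∧ ∀ p i j,
      C + ε * (p i - p j) ≤ potential (edgeWeight A) ((1 - α) / (2 * α - 1)) p := by
  obtain ⟨hpos, hzero, hsum, hbal, hin, hout⟩ := hρ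
  have := nonempty_of_weight_pos ha
  obtain ⟨k₀, hk₀⟩ := Finite.exists_min fun k : Fin n => ρ k.castSucc (Fin.last n)
  have hsource (k : Fin n) : 0 < ρ k.castSucc (Fin.last n) := hpos _ _ (by simp [augMatrix])
  have hsink (k : Fin n) : 0 < ρ (Fin.last n) k.castSucc := hpos _ _ (by simp [augMatrix])
  have hinner (i j : Fin n) : 0 ≤ ρ i.castSucc j.castSucc := by
    obtain h | h := (ha.le (i, j)).eq_or_lt
    · exact (hzero _ _ (by simpa [augMatrix, edgeWeight] using h.symm)).ge
    · exact (hpos _ _ (by simpa [augMatrix, edgeWeight] using h)).le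
  have hmass : ∑ e : Fin n × Fin n, ρ e.1.castSucc e.2.castSucc = 2 * α - 1 := by
    have hcorner : ρ (Fin.last n) (Fin.last n) = 0 := hzero _ _ (by simp [augMatrix])
    simp only [Fin.sum_univ_castSucc, Finset.sum_add_distrib, hin, hout, hcorner] at hsum
    rw [Fintype.sum_prod_type]
    linarith
  have hα' : 0 < 2 * α - 1 := by linarith
  have hboundary : (1 - α) = (1 - α) / (2 * α - 1) *
      ∑ e : Fin n × Fin n, ρ e.1.castSucc e.2.castSucc := by
    rw [hmass, div_mul_cancel₀ _ hα'.ne']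
  refine ⟨(∑ e : Fin n × Fin n, ρ e.1.castSucc e.2.castSucc * Real.log (edgeWeight A e)) /
    (2 * α - 1), ρ k₀.castSucc (Fin.last n) / (2 * α - 1), div_pos (hsource k₀) hα',
    fun p i j => ?_⟩
  have h := sum_mul_log_add_le_mul_potential (γ := (1 - α) / (2 * α - 1)) ha.le
    (fun e => hinner e.1 e.2) (fun e he => hzero _ _ (by simpa [augMatrix, edgeWeight] using he))
    (fun k => (hsink k).le) (hsource k₀).le hk₀
    (fun k => by simpa [Fin.sum_univ_castSucc] using hbal k.castSucc) (hout.trans hboundary)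
    (hin.trans hboundary) p i j
  rw [hmass] at h
  rw [div_mul_eq_mul_div, ← add_div, div_le_iff₀' hα']
  exact h

end EffHotsMap

end EffHots

/-- Convergence of the effective HOTS algorithm: if a feasible flow with the pattern of `A'`
exists, `F` has a fixed point, unique up to additive constants, and the fixed point iteration
converges linearly at rate `ρ = |λ₂(∇F(p*))| < 1`; consequently the HOTS vectors `e^{pᵏ}`
converge linearly at rate `ρ` to a HOTS vector, unique up to a multiplicative constant. -/
theorem effHots_converges {n : ℕ} (A : Matrix (Fin n) (Fin n) ℝ)
    (hA : ∀ i j, 0 ≤ A i j) (hA0 : A ≠ 0) (α : ℝ) (hα₁ : 1 / 2 < α) (hα₂ : α < 1)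
    (hfeas : ∃ ρ : Matrix (Fin (n + 1)) (Fin (n + 1)) ℝ, FeasibleFlow A α ρ) :
    ∃ pstar : Fin n → ℝ, effHotsMap A α pstar = pstar ∧
      (∀ q : Fin n → ℝ, effHotsMap A α q = q → ∃ c : ℝ, q = pstar + fun _ => c) ∧
      secondEigRadius (jacMatrix (effHotsMap A α) pstar) < 1 ∧
      ∀ p0 : Fin n → ℝ, ∃ pbar : Fin n → ℝ, effHotsMap A α pbar = pbar ∧
        Tendsto (fun k => (effHotsMap A α)^[k] p0) atTop (nhds pbar) ∧
        limsup (fun k : ℕ => ‖(effHotsMap A α)^[k] p0 - pbar‖ ^ (1 / (k : ℝ))) atTop ≤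
          secondEigRadius (jacMatrix (effHotsMap A α) pstar) ∧
        limsup (fun k : ℕ =>
            ‖(fun i => Real.exp ((effHotsMap A α)^[k] p0 i)) - fun i => Real.exp (pbar i)‖
              ^ (1 / (k : ℝ))) atTop ≤
          secondEigRadius (jacMatrix (effHotsMap A α) pstar) := by
  have ha := EffHots.edgeWeight_pos hA hA0
  have hγ : 0 < (1 - α) / (2 * α - 1) := div_pos (by linarith) (by linarith)
  obtain ⟨ρ, hρ⟩ := hfeas
  obtain ⟨C, ε, hε, hC⟩ := EffHots.exists_le_potential_of_feasibleFlow ha hα₁ hρ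
  obtain ⟨p, hp⟩ := EffHots.exists_balancingMap_eq_self ha hγ hε hC
  have hsplits := EffHots.splits_charpoly_fderiv_balancingMap ha hγ hp
  have hradius := EffHots.secondEigRadius_lt hsplits one_pos fun _ =>
    EffHots.abs_lt_one_of_hasEigenvalue_fderiv_balancingMap ha hγ hp
  have hradius_nonneg := EffHots.secondEigRadius_nonneg (jacMatrix (effHotsMap A α) p)
  rw [EffHots.effHotsMap_eq_balancingMap ha hγ] at hradius_nonneg ⊢
  refine ⟨p, hp, fun q => EffHots.exists_eq_add_const_of_balancingMap_eq ha hγ hp, hradius,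
    fun p0 => ?_⟩
  obtain ⟨pbar, hfix, hlim, hrate⟩ := EffHots.exists_tendsto_iterate_balancingMap ha hγ hp hε hC
    hradius_nonneg hradius (fun _ => EffHots.abs_le_secondEigRadius hsplits) p0
  exact ⟨pbar, hfix, hlim,
    EffHots.limsup_norm_rpow_le_of_forall_isBigO_pow hradius_nonneg hradius hrate,
    EffHots.limsup_norm_rpow_le_of_forall_isBigO_pow hradius_nonneg hradius fun r hr hr1 =>
      (EffHots.isBigO_exp_comp_sub hlim).trans (hrate r hr hr1)⟩
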